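/- arXiv:2408.04148 — 2 statements merged into one kernel-verified Lean document; each statement's English description precedes it below -/
import Mathlib

section
/- Let f : [0,∞) → ℝ satisfy 0 < f(ξ) < 1/2 for all ξ, and suppose there exists ξ₀ > 0 such that f(ξ^λ) ≤ f(ξ)^λ for all ξ ≥ ξ₀ and all λ ≥ 1. Then there is no Borel probability measure μ on ℝ with μ(ℝ \ 𝕃) = 0 for which there exist C > 0, M > 0 with |μ̂(ξ)| ≤ C·f(|ξ|) for all |ξ| ≥ M. -/
open MeasureTheory Filter Set

/-- The Fourier transform of a measure on `ℝ`: `μ̂(ξ) = ∫ e^(−2πiξx) dμ(x)`. -/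
noncomputable def fourierT (μ : Measure ℝ) (ξ : ℝ) : ℂ :=
  ∫ x, Complex.exp (((-2 * Real.pi * ξ * x : ℝ) : ℂ) * Complex.I) ∂μ

/-!
The inequality `f (ξ₀ ^ t) ≤ f ξ₀ ^ t` at one point `ξ₀ > 1` with `f ξ₀ < 1` already makes `f`
decay like a power `ξ ^ (-c)`. If `|x - p / q|` is smaller than a high power of `1 / q`, then `A x`,
where `A = q ^ m`, is so close to an integer that `|∑_{j < N} e^{2πijAx}| ≥ N / 2` for `N = q ^ 2`.
The integral of the square of this sum against `μ` involves only `μ̂(A (j - l))`, so by Markov's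
inequality such `x` have measure `O(1 / N + A ^ (-c))`. For `m c > 1` this is summable over `q`,
and the Borel–Cantelli lemma shows that `μ` does not charge the Liouville numbers.
-/

open Asymptotics Bornology

lemma le_rpow_logb_of_forall_rpow_le {f : ℝ → ℝ} {ξ₀ ξ : ℝ} (hξ₀ : 1 < ξ₀) (hpos : 0 < f ξ₀)
    (hf : ∀ t : ℝ, 1 ≤ t → f (ξ₀ ^ t) ≤ f ξ₀ ^ t) (hξ : ξ₀ ≤ ξ) :
    f ξ ≤ ξ ^ Real.logb ξ₀ (f ξ₀) := by
  have hξ₀_pos : 0 < ξ₀ := by positivity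
  have hξ_pos : 0 < ξ := hξ₀_pos.trans_le hξ
  have one_le_logb : 1 ≤ Real.logb ξ₀ ξ := by
    rwa [Real.le_logb_iff_rpow_le hξ₀ hξ_pos, Real.rpow_one]
  calc f ξ = f (ξ₀ ^ Real.logb ξ₀ ξ) := by rw [Real.rpow_logb hξ₀_pos hξ₀.ne' hξ_pos]
    _ ≤ f ξ₀ ^ Real.logb ξ₀ ξ := hf _ one_le_logb
    _ = ξ ^ Real.logb ξ₀ (f ξ₀) := by
      rw [Real.rpow_def_of_pos hpos, Real.rpow_def_of_pos hξ_pos, Real.logb, Real.logb]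
      ring_nf

/-- The exponential sum `∑_{j < N} e^{2πijt}`; its squared modulus is `N` times the Fejér kernel. -/
noncomputable def expSum (N : ℕ) (t : ℝ) : ℂ :=
  ∑ j ∈ Finset.range N, Complex.exp (((2 * Real.pi * (j * t) : ℝ) : ℂ) * Complex.I)

lemma expSum_re (N : ℕ) (t : ℝ) :
    (expSum N t).re = ∑ j ∈ Finset.range N, Real.cos (2 * Real.pi * (j * t)) := by
  simp only [expSum, Complex.re_sum, Complex.exp_ofReal_mul_I_re]

lemma expSum_im (N : ℕ) (t : ℝ) :
    (expSum N t).im = ∑ j ∈ Finset.range N, Real.sin (2 * Real.pi * (j * t)) := by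
  simp only [expSum, Complex.im_sum, Complex.exp_ofReal_mul_I_im]

lemma sq_norm_expSum (N : ℕ) (t : ℝ) :
    ‖expSum N t‖ ^ 2 = ∑ j ∈ Finset.range N, ∑ l ∈ Finset.range N,
      Real.cos (2 * Real.pi * (((j : ℝ) - l) * t)) := by
  rw [Complex.sq_norm, Complex.normSq_apply, expSum_re, expSum_im]
  simp only [Finset.sum_mul_sum, ← Finset.sum_add_distrib, ← Real.cos_sub, sub_mul, mul_sub]

lemma half_le_norm_expSum {N : ℕ} {t : ℝ} {k : ℤ} (ht : |t - k| ≤ 1 / (6 * N)) :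
    (N / 2 : ℝ) ≤ ‖expSum N t‖ := by
  have half_le_cos : ∀ j ∈ Finset.range N, (1 / 2 : ℝ) ≤ Real.cos (2 * Real.pi * (j * t)) := by
    intro j hj
    have hjN : j < N := Finset.mem_range.mp hj
    have hN : (0 : ℝ) < N := by exact_mod_cast hjN.pos
    have hphase : |2 * Real.pi * (j * (t - k))| ≤ Real.pi / 3 := calc
      |2 * Real.pi * (j * (t - k))| = 2 * Real.pi * (j * |t - k|) := by
        simp only [abs_mul, Nat.abs_cast, abs_of_pos Real.pi_pos, abs_two]
      _ ≤ 2 * Real.pi * (N * (1 / (6 * N))) := by gcongr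
      _ = Real.pi / 3 := by field_simp; norm_num
    calc (1 / 2 : ℝ) = Real.cos (Real.pi / 3) := Real.cos_pi_div_three.symm
      _ ≤ Real.cos |2 * Real.pi * (j * (t - k))| :=
        Real.cos_le_cos_of_nonneg_of_le_pi (abs_nonneg _) (by linarith [Real.pi_pos]) hphase
      _ = Real.cos (2 * Real.pi * (j * t) - (j * k : ℤ) * (2 * Real.pi)) := by
        rw [Real.cos_abs]
        push_cast
        ring_nf
      _ = Real.cos (2 * Real.pi * (j * t)) := Real.cos_sub_int_mul_two_pi _ _
  calc (N / 2 : ℝ) = ∑ j ∈ Finset.range N, (1 / 2 : ℝ) := by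
        rw [Finset.sum_const, Finset.card_range, nsmul_eq_mul, mul_one_div]
    _ ≤ (expSum N t).re := by
        rw [expSum_re]
        exact Finset.sum_le_sum half_le_cos
    _ ≤ ‖expSum N t‖ := Complex.re_le_norm _

section FiniteMeasure

variable {μ : Measure ℝ} [IsFiniteMeasure μ]

lemma integrable_cos_two_pi_mul (ξ : ℝ) :
    Integrable (fun x => Real.cos (2 * Real.pi * (ξ * x))) μ :=
  Integrable.of_bound (C := 1) (by fun_prop) (Eventually.of_forall fun _ => Real.abs_cos_le_one _)

lemma fourierT_re (ξ : ℝ) : (fourierT μ ξ).re = ∫ x, Real.cos (2 * Real.pi * (ξ * x)) ∂μ := by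
  have hint : Integrable (fun x : ℝ =>
      Complex.exp (((-2 * Real.pi * ξ * x : ℝ) : ℂ) * Complex.I)) μ :=
    Integrable.of_bound (C := 1) (by fun_prop)
      (Eventually.of_forall fun _ => (Complex.norm_exp_ofReal_mul_I _).le)
  calc (fourierT μ ξ).re
      = ∫ x, (Complex.exp (((-2 * Real.pi * ξ * x : ℝ) : ℂ) * Complex.I)).re ∂μ :=
        (integral_re hint).symm
    _ = ∫ x, Real.cos (2 * Real.pi * (ξ * x)) ∂μ := by
        congr with x
        rw [Complex.exp_ofReal_mul_I_re, ← Real.cos_neg]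
        ring_nf

lemma integrable_sq_norm_expSum (N : ℕ) (a : ℝ) :
    Integrable (fun x => ‖expSum N (a * x)‖ ^ 2) μ := by
  simp only [sq_norm_expSum, ← mul_assoc _ a]
  exact integrable_finsetSum _ fun _ _ => integrable_finsetSum _ fun _ _ =>
    integrable_cos_two_pi_mul _

lemma integral_sq_norm_expSum (N : ℕ) (a : ℝ) :
    ∫ x, ‖expSum N (a * x)‖ ^ 2 ∂μ = ∑ j ∈ Finset.range N, ∑ l ∈ Finset.range N,
      (fourierT μ (((j : ℝ) - l) * a)).re := by
  simp only [sq_norm_expSum, ← mul_assoc _ a, fourierT_re]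
  rw [integral_finsetSum _ fun _ _ => integrable_finsetSum _ fun _ _ => integrable_cos_two_pi_mul _]
  exact Finset.sum_congr rfl fun _ _ =>
    integral_finsetSum _ fun _ _ => integrable_cos_two_pi_mul _

lemma integral_sq_norm_expSum_le {N : ℕ} {a D : ℝ}
    (hD : ∀ ξ : ℝ, a ≤ |ξ| → ‖fourierT μ ξ‖ ≤ D) :
    ∫ x, ‖expSum N (a * x)‖ ^ 2 ∂μ ≤ N * μ.real univ + N ^ 2 * D := by
  have hD_nonneg : 0 ≤ D := (norm_nonneg _).trans (hD a (le_abs_self a))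
  have re_le (j l : ℕ) :
      (fourierT μ (((j : ℝ) - l) * a)).re ≤ (if j = l then μ.real univ else 0) + D := by
    split_ifs with hjl
    · simpa [hjl, fourierT_re] using hD_nonneg
    · have one_le : (1 : ℝ) ≤ |(j : ℝ) - l| := by
        exact_mod_cast Int.one_le_abs (sub_ne_zero.mpr (Nat.cast_injective.ne hjl))
      have ha : a ≤ |((j : ℝ) - l) * a| := calc
        a ≤ 1 * |a| := by simpa only [one_mul] using le_abs_self a
        _ ≤ |((j : ℝ) - l) * a| := by rw [abs_mul]; gcongr
      simpa only [zero_add] using (Complex.re_le_norm _).trans (hD _ ha)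
  calc ∫ x, ‖expSum N (a * x)‖ ^ 2 ∂μ
      ≤ ∑ j ∈ Finset.range N, ∑ l ∈ Finset.range N, ((if j = l then μ.real univ else 0) + D) := by
        rw [integral_sq_norm_expSum]
        exact Finset.sum_le_sum fun j _ => Finset.sum_le_sum fun l _ => re_le j l
    _ = N * μ.real univ + N ^ 2 * D := by
        simp +contextual only [Finset.sum_add_distrib, Finset.sum_ite_eq, if_true,
          Finset.sum_const, Finset.card_range, nsmul_eq_mul]
        ring

lemma measureReal_near_int_le {N : ℕ} (hN : N ≠ 0) {a D : ℝ}
    (hD : ∀ ξ : ℝ, a ≤ |ξ| → ‖fourierT μ ξ‖ ≤ D) :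
    μ.real {x | ∃ k : ℤ, |a * x - k| ≤ 1 / (6 * N)} ≤ 4 * (μ.real univ / N + D) := by
  have : (0 : ℝ) < N := by exact_mod_cast hN.bot_lt
  have hsubset : {x | ∃ k : ℤ, |a * x - k| ≤ 1 / (6 * N)} ⊆
      {x | (N / 2 : ℝ) ^ 2 ≤ ‖expSum N (a * x)‖ ^ 2} := by
    rintro x ⟨k, hk⟩
    exact pow_le_pow_left₀ (by positivity) (half_le_norm_expSum hk) 2
  have hmarkov := (mul_meas_ge_le_integral_of_nonneg (μ := μ)
    (Eventually.of_forall fun x => sq_nonneg ‖expSum N (a * x)‖)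
    (integrable_sq_norm_expSum N a) ((N / 2 : ℝ) ^ 2)).trans (integral_sq_norm_expSum_le hD)
  have hscale : N * μ.real univ + N ^ 2 * D = (N / 2 : ℝ) ^ 2 * (4 * (μ.real univ / N + D)) := by
    field_simp
    ring
  exact (measureReal_mono hsubset).trans
    (le_of_mul_le_mul_left (hmarkov.trans_eq hscale) (by positivity))

end FiniteMeasure

lemma exists_abs_pow_mul_sub_le {q m : ℕ} (hq : 6 ≤ q) (hm : m ≠ 0) {x : ℝ} {p : ℤ}
    (hx : |x - p / q| < 1 / (q : ℝ) ^ (m + 3)) :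
    ∃ k : ℤ, |(q : ℝ) ^ m * x - k| ≤ 1 / (6 * (q ^ 2 : ℕ)) := by
  obtain ⟨n, rfl⟩ := Nat.exists_eq_succ_of_ne_zero hm
  have hq' : (6 : ℝ) ≤ q := by exact_mod_cast hq
  have : (0 : ℝ) < q := by linarith
  refine ⟨q ^ n * p, ?_⟩
  have hfactor : (q : ℝ) ^ (n + 1) * x - (q ^ n * p : ℤ) = (q : ℝ) ^ (n + 1) * (x - p / q) := by
    push_cast
    field_simp
    ring
  calc |(q : ℝ) ^ (n + 1) * x - (q ^ n * p : ℤ)| = (q : ℝ) ^ (n + 1) * |x - p / q| := by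
        rw [hfactor, abs_mul, abs_of_pos (by positivity)]
    _ ≤ (q : ℝ) ^ (n + 1) * (1 / (q : ℝ) ^ (n + 1 + 3)) := by gcongr
    _ = 1 / (q * (q : ℝ) ^ 2) := by field_simp; ring
    _ ≤ 1 / (6 * (q ^ 2 : ℕ)) := by push_cast; gcongr

lemma measure_frequently_eq_zero_of_summable {α : Type*} [MeasurableSpace α] {μ : Measure α}
    [IsFiniteMeasure μ] {P : ℕ → α → Prop} (h : Summable fun n => μ.real {x | P n x}) :
    μ {x | ∃ᶠ n in atTop, P n x} = 0 :=
  measure_setOfPred_frequently_eq_zero <| by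
    simpa only [ofReal_measureReal (measure_ne_top μ _)] using h.tsum_ofReal_ne_top

section PowerDecay

variable {μ : Measure ℝ} [IsFiniteMeasure μ] {c : ℝ}

lemma eventually_measureReal_abs_sub_div_lt_le {C : ℝ} (hc : 0 ≤ c) (hC : 0 ≤ C)
    (hμ : ∀ᶠ ξ in cobounded ℝ, ‖fourierT μ ξ‖ ≤ C * |ξ| ^ (-c)) {m : ℕ} (hm : m ≠ 0) :
    ∀ᶠ q : ℕ in atTop, μ.real {x | ∃ p : ℤ, |x - p / q| < 1 / (q : ℝ) ^ (m + 3)} ≤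
      4 * (μ.real univ / (q : ℝ) ^ 2 + C * (q : ℝ) ^ (-(m * c))) := by
  obtain ⟨R, -, hR⟩ := hasBasis_cobounded_norm.eventually_iff.mp hμ
  filter_upwards [eventually_ge_atTop 6, eventually_ge_atTop ⌈R⌉₊] with q hq6 hqR
  have hq1 : (1 : ℝ) ≤ q := by exact_mod_cast (by lia : 1 ≤ q)
  have hRq : R ≤ (q : ℝ) ^ m := (Nat.ceil_le.mp hqR).trans (le_self_pow₀ hq1 hm)
  have hfourier : ∀ ξ : ℝ, (q : ℝ) ^ m ≤ |ξ| → ‖fourierT μ ξ‖ ≤ C * (q : ℝ) ^ (-(m * c)) := by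
    intro ξ hξ
    calc ‖fourierT μ ξ‖ ≤ C * |ξ| ^ (-c) := hR (hRq.trans hξ)
      _ ≤ C * ((q : ℝ) ^ m) ^ (-c) := by
        gcongr C * ?_
        exact Real.rpow_le_rpow_of_nonpos (by positivity) hξ (neg_nonpos.mpr hc)
      _ = C * (q : ℝ) ^ (-(m * c)) := by
        rw [← Real.rpow_natCast_mul (by positivity), mul_neg]
  calc μ.real {x | ∃ p : ℤ, |x - p / q| < 1 / (q : ℝ) ^ (m + 3)}
      ≤ μ.real {x | ∃ k : ℤ, |(q : ℝ) ^ m * x - k| ≤ 1 / (6 * (q ^ 2 : ℕ))} :=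
        measureReal_mono fun _ ⟨_, hp⟩ => exists_abs_pow_mul_sub_le hq6 hm hp
    _ ≤ 4 * (μ.real univ / (q ^ 2 : ℕ) + C * (q : ℝ) ^ (-(m * c))) :=
        measureReal_near_int_le (by positivity) hfourier
    _ = 4 * (μ.real univ / (q : ℝ) ^ 2 + C * (q : ℝ) ^ (-(m * c))) := by rw [Nat.cast_pow]

theorem measure_frequently_abs_sub_div_lt_eq_zero
    (hμ : fourierT μ =O[cobounded ℝ] fun ξ => |ξ| ^ (-c)) {m : ℕ} (hm : 1 < m * c) :
    μ {x | ∃ᶠ q : ℕ in atTop, ∃ p : ℤ, |x - p / q| < 1 / (q : ℝ) ^ (m + 3)} = 0 := by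
  have hmc : 0 < m * c := one_pos.trans hm
  have hc : 0 < c := pos_of_mul_pos_right hmc m.cast_nonneg
  have hm_ne : m ≠ 0 := Nat.cast_ne_zero.mp (left_ne_zero_of_mul hmc.ne')
  obtain ⟨C, hC, hμC⟩ := hμ.exists_pos
  have hdecay : ∀ᶠ ξ in cobounded ℝ, ‖fourierT μ ξ‖ ≤ C * |ξ| ^ (-c) :=
    hμC.bound.mono fun ξ hξ => by
      rwa [Real.norm_of_nonneg (Real.rpow_nonneg (abs_nonneg ξ) _)] at hξ
  have hsummable : Summable fun q : ℕ =>
      4 * (μ.real univ / (q : ℝ) ^ 2 + C * (q : ℝ) ^ (-(m * c))) := by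
    have hsq : Summable fun q : ℕ => μ.real univ / (q : ℝ) ^ 2 := by
      simpa only [mul_one_div] using
        (Real.summable_one_div_nat_pow.mpr one_lt_two).mul_left (μ.real univ)
    exact (hsq.add ((Real.summable_nat_rpow.mpr (neg_lt_neg hm)).mul_left C)).mul_left 4
  refine measure_frequently_eq_zero_of_summable (hsummable.of_norm_bounded_eventually_nat ?_)
  simpa only [Real.norm_of_nonneg measureReal_nonneg] using
    eventually_measureReal_abs_sub_div_lt_le hc.le hC.le hdecay hm_ne

theorem measure_liouville_eq_zero (hc : 0 < c)
    (hμ : fourierT μ =O[cobounded ℝ] fun ξ => |ξ| ^ (-c)) : μ {x | Liouville x} = 0 := by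
  obtain ⟨m, hm⟩ := exists_nat_gt (1 / c)
  refine measure_mono_null (fun x (hx : Liouville x) => ?_)
    (measure_frequently_abs_sub_div_lt_eq_zero hμ ((div_lt_iff₀ hc).mp hm))
  exact (hx.frequently_exists_num (m + 3)).mono fun _ ⟨p, _, hp⟩ => ⟨p, hp⟩

end PowerDecay

theorem stmt10_general {f : ℝ → ℝ} {ξ₀ : ℝ} (hξ₀ : 1 < ξ₀) (hpos : 0 < f ξ₀) (hlt : f ξ₀ < 1)
    (hf : ∀ t : ℝ, 1 ≤ t → f (ξ₀ ^ t) ≤ f ξ₀ ^ t) {μ : Measure ℝ} [IsFiniteMeasure μ] {C : ℝ}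
    (hC : 0 ≤ C) (hμ : ∀ᶠ ξ in cobounded ℝ, ‖fourierT μ ξ‖ ≤ C * f |ξ|) :
    μ {x | Liouville x} = 0 := by
  have hc : 0 < -Real.logb ξ₀ (f ξ₀) := neg_pos.mpr (Real.logb_neg hξ₀ hpos hlt)
  refine measure_liouville_eq_zero hc (IsBigO.of_bound C ?_)
  filter_upwards [hμ, eventually_cobounded_le_norm ξ₀] with ξ hξ hξ₀ξ
  calc ‖fourierT μ ξ‖ ≤ C * f |ξ| := hξ
    _ ≤ C * |ξ| ^ Real.logb ξ₀ (f ξ₀) := by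
      gcongr
      exact le_rpow_logb_of_forall_rpow_le hξ₀ hpos hf hξ₀ξ
    _ ≤ C * ‖|ξ| ^ (-(-Real.logb ξ₀ (f ξ₀)))‖ := by
      rw [neg_neg]
      gcongr
      exact Real.le_norm_self _

theorem stmt10 (f : ℝ → ℝ)
    (hf : ∀ ξ, 0 ≤ ξ → 0 < f ξ ∧ f ξ < 1 / 2)
    (hsuper : ∃ ξ₀ > (0 : ℝ), ∀ ξ, ξ₀ ≤ ξ → ∀ lam : ℝ, 1 ≤ lam →
      f (ξ ^ lam) ≤ (f ξ) ^ lam) :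
    ¬ ∃ μ : Measure ℝ, IsProbabilityMeasure μ ∧ μ {x : ℝ | Liouville x}ᶜ = 0 ∧
      ∃ C > (0 : ℝ), ∃ M > (0 : ℝ),
        ∀ ξ : ℝ, M ≤ |ξ| → ‖fourierT μ ξ‖ ≤ C * f |ξ| := by
  rintro ⟨μ, _, hL, C, hC, M, -, hdecay⟩
  obtain ⟨ξ₀, hξ₀, hsuper⟩ := hsuper
  obtain ⟨hpos, hlt⟩ := hf (ξ₀ + 1) (by linarith)
  have hnull : μ {x | Liouville x} = 0 :=
    stmt10_general (by linarith) hpos (by linarith) (hsuper _ (by linarith)) hC.le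
      ((eventually_cobounded_le_norm M).mono hdecay)
  simpa [hL, hnull] using measure_univ_le_add_compl (μ := μ) {x | Liouville x}
end

section
/- There exist a nonzero finite Borel measure ν on ℝ with ν(ℝ \ 𝕃) = 0 and constants C > 0, M > e such that |ν̂(ξ)| ≤ C·|cos(2πξ)|/log(|ξ|) for all ξ ∈ ℝ with |ξ| ≥ M. -/
open MeasureTheory Filter Set

/-!
Let `X = ∑ X_k` be a random sum of independent rationals `X_k = a / q ∈ (0, δ_k]`, where `q` is a
random prime of size at most `d_{k+1}` and `δ_k = d_k ^ (-2(k+1))`. The partial sums approximate `X`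
so well relative to their denominators that `X` is a Liouville number.

Averaging over `a` gives a geometric sum, which is small at `ξ` unless `ξ` is within
`H = log |ξ| / δ_k` of a multiple of `q`. A prime `q` of this exceptional kind divides one of the
`O(H)` nonzero integers near `ξ`, so there are `O(H log |ξ|)` of them, a proportion at most
`1 / log |ξ|` of all primes up to `d_{k+1}` once `d_{k+1}` is large. Hence the law of `X_k` has
Fourier transform `O(1 / log |ξ|)` in the window `d_k ^ (4(k+1)) ≤ |ξ| ≤ d_{k+1} ^ (4(k+2))`. By
independence the law of `X` inherits every one of these bounds, and consecutive windows abut.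

Convolving with `δ_1 + δ_{-1}` preserves concentration on the Liouville numbers and multiplies the
Fourier transform by `2 cos (2πξ)`.
-/

open scoped BigOperators ENNReal RealInnerProductSpace Topology Nat.Prime

section AverageMeasure

variable {ι α : Type*} [MeasurableSpace α] {s : Finset ι} {μ : ι → Measure α}

/-- The average `(#s)⁻¹ ∑ i ∈ s, μ i` of finitely many measures. It is the zero measure when `s` is
empty. -/
noncomputable def averageMeasure (s : Finset ι) (μ : ι → Measure α) : Measure α :=
  (s.card : ℝ≥0∞)⁻¹ • ∑ i ∈ s, μ i

lemma isProbabilityMeasure_averageMeasure (hs : s.Nonempty)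
    (hμ : ∀ i ∈ s, IsProbabilityMeasure (μ i)) : IsProbabilityMeasure (averageMeasure s μ) := by
  have hcard : (s.card : ℝ≥0∞) ≠ 0 := by exact_mod_cast hs.card_ne_zero
  have hsum : ∑ i ∈ s, μ i univ = s.card := by
    rw [Finset.sum_congr rfl fun i hi ↦ (hμ i hi).measure_univ, Finset.sum_const, nsmul_one]
  constructor
  simp [averageMeasure, hsum, ENNReal.inv_mul_cancel hcard]

lemma ae_averageMeasure {p : α → Prop} (h : ∀ i ∈ s, ∀ᵐ x ∂μ i, p x) :
    ∀ᵐ x ∂averageMeasure s μ, p x := by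
  refine Measure.ae_smul_measure ?_ _
  rw [← Measure.sum_coe_finset, Measure.ae_sum_iff]
  exact fun i ↦ h i i.2

lemma charFun_averageMeasure {E : Type*} [MeasurableSpace E] [SeminormedAddCommGroup E]
    [InnerProductSpace ℝ E] [OpensMeasurableSpace E] [SecondCountableTopology E]
    {s : Finset ι} {μ : ι → Measure E} (hμ : ∀ i ∈ s, IsFiniteMeasure (μ i)) (t : E) :
    charFun (averageMeasure s μ) t = 𝔼 i ∈ s, charFun (μ i) t := by
  have hint (i : ι) (hi : i ∈ s) :
      Integrable (fun x ↦ Complex.exp (⟪x, t⟫ * Complex.I)) (μ i) :=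
    have := hμ i hi
    .of_bound (by fun_prop) 1 (ae_of_all _ fun x ↦ (Complex.norm_exp_ofReal_mul_I _).le)
  simp only [charFun_apply, averageMeasure]
  rw [integral_smul_measure, integral_finsetSum_measure hint,
    Finset.expect_eq_sum_div_card, ENNReal.toReal_inv, ENNReal.toReal_natCast, Complex.real_smul,
    Complex.ofReal_inv, Complex.ofReal_natCast, inv_mul_eq_div]

end AverageMeasure

lemma norm_expect_le_of_card_filter_le {ι : Type*} {s : Finset ι} {f : ι → ℂ}
    {p : ι → Prop} [DecidablePred p] {ε η : ℝ} (hε : 0 ≤ ε) (hs : s.Nonempty)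
    (hf : ∀ i ∈ s, ‖f i‖ ≤ 1) (hfε : ∀ i ∈ s, ¬p i → ‖f i‖ ≤ ε)
    (hp : ((s.filter p).card : ℝ) ≤ η * s.card) :
    ‖𝔼 i ∈ s, f i‖ ≤ η + ε := by
  have hcard : (0 : ℝ) < s.card := by exact_mod_cast hs.card_pos
  have hsum : ‖∑ i ∈ s, f i‖ ≤ ∑ i ∈ s, ((if p i then 1 else 0) + ε) := by
    refine norm_sum_le_of_le s fun i hi ↦ ?_
    split_ifs with hpi
    · linarith [hf i hi]
    · simpa using hfε i hi hpi
  rw [Finset.sum_add_distrib, Finset.sum_boole, Finset.sum_const, nsmul_eq_mul] at hsum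
  rw [Finset.expect_eq_sum_div_card, norm_div, Complex.norm_natCast, div_le_iff₀ hcard]
  linarith

section IndependentSum

open ProbabilityTheory

variable {Ω E ι : Type*} [MeasurableSpace Ω] {P : Measure Ω} [NormedAddCommGroup E]
  [MeasurableSpace E] [BorelSpace E]

lemma aemeasurable_tsum_of_ae_summable [SecondCountableTopology E] [Countable ι]
    {X : ι → Ω → E} (hX : ∀ i, AEMeasurable (X i) P)
    (hs : ∀ᵐ ω ∂P, Summable fun i ↦ X i ω) :
    AEMeasurable (fun ω ↦ ∑' i, X i ω) P :=
  aemeasurable_of_tendsto_metrizable_ae (atTop : Filter (Finset ι))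
    (fun s ↦ Finset.aemeasurable_fun_sum s fun i _ ↦ hX i) (hs.mono fun _ hω ↦ hω.hasSum)

variable [InnerProductSpace ℝ E]

lemma tendsto_charFun_map_of_ae_tendsto [IsProbabilityMeasure P] {l : Filter ι}
    [l.IsCountablyGenerated] {Y : ι → Ω → E} {Z : Ω → E} (hY : ∀ i, AEMeasurable (Y i) P)
    (hZ : AEMeasurable Z P) (h : ∀ᵐ ω ∂P, Tendsto (fun i ↦ Y i ω) l (𝓝 (Z ω))) (t : E) :
    Tendsto (fun i ↦ charFun (P.map (Y i)) t) l (𝓝 (charFun (P.map Z) t)) := by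
  simp only [charFun_eq_integral_innerProbChar]
  exact (ProbabilityMeasure.tendsto_iff_forall_integral_rclike_tendsto ℂ).1
    (tendstoInDistribution_of_ae_tendsto hY hZ h).tendsto
    (BoundedContinuousFunction.innerProbChar t)

variable [SecondCountableTopology E]

lemma norm_charFun_map_sum_le {X : ι → Ω → E} (hX : ∀ i, AEMeasurable (X i) P)
    (hind : iIndepFun X P) {s : Finset ι} {k : ι} (hk : k ∈ s) (t : E) :
    ‖charFun (P.map fun ω ↦ ∑ i ∈ s, X i ω) t‖ ≤ ‖charFun (P.map (X k)) t‖ := by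
  classical
  have := hind.isProbabilityMeasure
  have hprob (i : ι) : IsProbabilityMeasure (P.map (X i)) :=
    Measure.isProbabilityMeasure_map (hX i)
  rw [(hind.restrict s).charFun_map_fun_finsetSum_eq_prod fun i _ ↦ hX i, Finset.prod_apply,
    norm_prod, ← Finset.mul_prod_erase s _ hk]
  exact mul_le_of_le_one_right (norm_nonneg _)
    (Finset.prod_le_one (fun _ _ ↦ norm_nonneg _) fun _ _ ↦ norm_charFun_le_one t)

lemma norm_charFun_map_tsum_le [Countable ι] {X : ι → Ω → E} (hX : ∀ i, AEMeasurable (X i) P)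
    (hind : iIndepFun X P) (hs : ∀ᵐ ω ∂P, Summable fun i ↦ X i ω) (k : ι) (t : E) :
    ‖charFun (P.map fun ω ↦ ∑' i, X i ω) t‖ ≤ ‖charFun (P.map (X k)) t‖ := by
  have := hind.isProbabilityMeasure
  have hlim : Tendsto (fun s : Finset ι ↦ charFun (P.map fun ω ↦ ∑ i ∈ s, X i ω) t) atTop
      (𝓝 (charFun (P.map fun ω ↦ ∑' i, X i ω) t)) :=
    tendsto_charFun_map_of_ae_tendsto (fun s ↦ Finset.aemeasurable_fun_sum s fun i _ ↦ hX i)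
      (aemeasurable_tsum_of_ae_summable hX hs) (hs.mono fun _ hω ↦ hω.hasSum) t
  refine le_of_tendsto hlim.norm ?_
  filter_upwards [eventually_ge_atTop {k}] with s hks
  exact norm_charFun_map_sum_le hX hind (Finset.singleton_subset_iff.1 hks) t

lemma norm_charFun_map_tsum_infinitePi_le [Countable ι] {ρ : ι → Measure E}
    [∀ i, IsProbabilityMeasure (ρ i)] (hs : ∀ᵐ ω ∂Measure.infinitePi ρ, Summable ω) (k : ι)
    (t : E) :
    ‖charFun ((Measure.infinitePi ρ).map fun ω ↦ ∑' i, ω i) t‖ ≤ ‖charFun (ρ k) t‖ := by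
  have hind : iIndepFun (fun i (ω : ι → E) ↦ ω i) (Measure.infinitePi ρ) :=
    iIndepFun_infinitePi (X := fun _ ↦ id) fun _ ↦ measurable_id
  rw [← Measure.infinitePi_map_eval ρ k]
  exact norm_charFun_map_tsum_le (fun i ↦ (measurable_pi_apply i).aemeasurable) hind hs k t

end IndependentSum

lemma fourierT_eq_charFun (μ : Measure ℝ) (ξ : ℝ) :
    fourierT μ ξ = charFun μ (-2 * Real.pi * ξ) := by
  rw [fourierT, charFun_apply_real]
  push_cast
  rfl

section UniformFractions

lemma norm_geom_sum_Ico_mul_norm_sub_one_le {𝕜 : Type*} [NormedField 𝕜] {z : 𝕜} (hz : ‖z‖ ≤ 1)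
    {m n : ℕ} (hmn : m ≤ n) : ‖∑ i ∈ Finset.Ico m n, z ^ i‖ * ‖z - 1‖ ≤ 2 := by
  rw [← norm_mul, geom_sum_Ico_mul z hmn]
  calc ‖z ^ n - z ^ m‖ ≤ ‖z ^ n‖ + ‖z ^ m‖ := norm_sub_le _ _
    _ ≤ 1 + 1 := by simp only [norm_pow]; gcongr <;> exact pow_le_one₀ (norm_nonneg z) hz
    _ = 2 := one_add_one_eq_two

lemma four_mul_norm_addCircle_le {p : ℝ} (hp : 0 < p) (x : ℝ) :
    4 * ‖(x : AddCircle p)‖ ≤ p * ‖Complex.exp (Complex.I * (2 * Real.pi * x / p : ℝ)) - 1‖ := by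
  set θ : ℝ := p⁻¹ * x - round (p⁻¹ * x) with hθ
  have hθ_le : |Real.pi * θ| ≤ Real.pi / 2 := by
    rw [abs_mul, abs_of_pos Real.pi_pos]
    nlinarith [abs_sub_round (p⁻¹ * x), Real.pi_pos]
  have hsin : |Real.sin (2 * Real.pi * x / p / 2)| = |Real.sin (Real.pi * θ)| := by
    rw [hθ, mul_sub, mul_comm Real.pi (round _ : ℝ), Real.sin_sub_int_mul_pi, abs_mul,
      abs_neg_one_zpow, one_mul]
    congr 2
    ring
  have hjordan : 2 * |θ| ≤ |Real.sin (Real.pi * θ)| := by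
    convert Real.mul_abs_le_abs_sin hθ_le using 1
    rw [abs_mul, abs_of_pos Real.pi_pos]
    field_simp
  rw [AddCircle.norm_eq' p hp, Complex.norm_exp_I_mul_ofReal_sub_one, norm_mul, Real.norm_eq_abs,
    Real.norm_eq_abs, abs_two, hsin]
  nlinarith

/-- The uniform probability measure on the fractions `1 / q, …, N / q`. -/
noncomputable def uniformFractions (q N : ℕ) : Measure ℝ :=
  averageMeasure (Finset.Ico 1 (N + 1)) fun a ↦ Measure.dirac (a / q : ℝ)

lemma isProbabilityMeasure_uniformFractions (q : ℕ) {N : ℕ} (hN : 0 < N) :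
    IsProbabilityMeasure (uniformFractions q N) :=
  isProbabilityMeasure_averageMeasure (Finset.nonempty_Ico.2 (by lia)) fun _ _ ↦ inferInstance

lemma fourierT_uniformFractions (q N : ℕ) (ξ : ℝ) :
    fourierT (uniformFractions q N) ξ =
      (∑ a ∈ Finset.Ico 1 (N + 1),
        Complex.exp (Complex.I * (2 * Real.pi * (-ξ) / q : ℝ)) ^ a) / N := by
  rw [fourierT_eq_charFun, uniformFractions, charFun_averageMeasure fun _ _ ↦ inferInstance,
    Finset.expect_eq_sum_div_card, Nat.card_Ico, Nat.add_sub_cancel]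
  congr! 2 with a
  rw [charFun_dirac, ← Complex.exp_nat_mul]
  congr 1
  simp
  ring

lemma norm_fourierT_uniformFractions_mul_le {q : ℕ} (hq : 0 < q) (N : ℕ) (ξ : ℝ) :
    ‖fourierT (uniformFractions q N) ξ‖ * (N * ‖(ξ : AddCircle (q : ℝ))‖) ≤ q / 2 := by
  rcases N.eq_zero_or_pos with rfl | hN
  · simp only [Nat.cast_zero, zero_mul, mul_zero]
    positivity
  set z : ℂ := Complex.exp (Complex.I * (2 * Real.pi * (-ξ) / q : ℝ))
  have hz_norm : ‖z‖ = 1 := Complex.norm_exp_I_mul_ofReal _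
  have hgeom := norm_geom_sum_Ico_mul_norm_sub_one_le hz_norm.le (Nat.le_add_left 1 N)
  have hdist : 4 * ‖(ξ : AddCircle (q : ℝ))‖ ≤ q * ‖z - 1‖ := by
    simpa only [AddCircle.coe_neg, norm_neg] using
      four_mul_norm_addCircle_le (Nat.cast_pos.2 hq) (-ξ)
  rw [fourierT_uniformFractions, norm_div, Complex.norm_natCast, ← mul_assoc,
    div_mul_cancel₀ _ (Nat.cast_ne_zero.2 hN.ne')]
  set G := ‖∑ a ∈ Finset.Ico 1 (N + 1), z ^ a‖
  have : 0 ≤ G := norm_nonneg _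
  calc G * ‖(ξ : AddCircle (q : ℝ))‖ ≤ G * (q * ‖z - 1‖ / 4) := by gcongr; linarith
    _ = q / 4 * (G * ‖z - 1‖) := by ring
    _ ≤ q / 4 * 2 := by gcongr
    _ = q / 2 := by ring

end UniformFractions

section PrimeCounting

lemma card_primeFactors_mul_log_two_le {n : ℕ} (hn : n ≠ 0) :
    n.primeFactors.card * Real.log 2 ≤ Real.log n := by
  have hpow : 2 ^ n.primeFactors.card ≤ n :=
    calc 2 ^ n.primeFactors.card ≤ ∏ p ∈ n.primeFactors, p :=
          Finset.pow_card_le_prod _ _ _ fun p hp ↦ (Nat.prime_of_mem_primeFactors hp).two_le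
      _ ≤ n := Nat.le_of_dvd (Nat.pos_of_ne_zero hn) (Nat.prod_primeFactors_dvd n)
  rw [← Real.log_pow]
  exact Real.log_le_log (by positivity) (by exact_mod_cast hpow)

lemma card_primeFactors_prod_natAbs_mul_log_two_le {W : Finset ℤ} {X : ℝ} (hW : ∀ n ∈ W, n ≠ 0)
    (hX : ∀ n ∈ W, |(n : ℝ)| ≤ X) :
    (∏ n ∈ W, n.natAbs).primeFactors.card * Real.log 2 ≤ W.card * Real.log X := by
  have hne (n : ℤ) (hn : n ∈ W) : n.natAbs ≠ 0 := Int.natAbs_ne_zero.2 (hW n hn)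
  calc (∏ n ∈ W, n.natAbs).primeFactors.card * Real.log 2
      ≤ Real.log (∏ n ∈ W, n.natAbs : ℕ) :=
        card_primeFactors_mul_log_two_le (Finset.prod_ne_zero_iff.2 hne)
    _ = ∑ n ∈ W, Real.log n.natAbs := by
        rw [Nat.cast_prod, Real.log_prod fun n hn ↦ Nat.cast_ne_zero.2 (hne n hn)]
    _ ≤ W.card • Real.log X := Finset.sum_le_card_nsmul _ _ _ fun n hn ↦
        Real.log_le_log (Nat.cast_pos.2 (Nat.pos_of_ne_zero (hne n hn)))
          (by simpa only [Nat.cast_natAbs, Int.cast_abs] using hX n hn)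
    _ = W.card * Real.log X := nsmul_eq_mul _ _

lemma card_Icc_ceil_floor_le {a b : ℝ} (hab : a ≤ b) :
    ((Finset.Icc ⌈a⌉ ⌊b⌋).card : ℝ) ≤ b - a + 1 := by
  have htoNat : ((⌊b⌋ + 1 - ⌈a⌉).toNat : ℝ) = max ((⌊b⌋ : ℝ) + 1 - ⌈a⌉) 0 := by
    exact_mod_cast congrArg (Int.cast : ℤ → ℝ) (Int.toNat_eq_max (⌊b⌋ + 1 - ⌈a⌉))
  rw [Int.card_Icc, htoNat]
  exact max_le (by linarith [Int.floor_le b, Int.le_ceil a]) (by linarith)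

lemma card_filter_norm_addCircle_lt_mul_log_two_le {S : Finset ℕ} (hS : ∀ q ∈ S, q.Prime)
    {ξ H : ℝ} (hH : 0 ≤ H) (hHξ : H < |ξ|) (hξ : 1 ≤ |ξ|) :
    (S.filter fun q : ℕ ↦ ‖(ξ : AddCircle (q : ℝ))‖ < H).card * Real.log 2 ≤
      (2 * H + 1) * Real.log (|ξ| + H) := by
  set W : Finset ℤ := Finset.Icc ⌈ξ - H⌉ ⌊ξ + H⌋
  have hW {n : ℤ} : n ∈ W ↔ |ξ - n| ≤ H := by
    rw [Finset.mem_Icc, Int.ceil_le, Int.le_floor, abs_le]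
    constructor <;> rintro ⟨h₁, h₂⟩ <;> constructor <;> linarith
  have hW_ne (n : ℤ) (hn : n ∈ W) : n ≠ 0 := by
    rintro rfl
    rw [hW, Int.cast_zero, sub_zero] at hn
    linarith
  have hW_le (n : ℤ) (hn : n ∈ W) : |(n : ℝ)| ≤ |ξ| + H := by
    linarith [abs_sub_abs_le_abs_sub (n : ℝ) ξ, abs_sub_comm (n : ℝ) ξ, hW.1 hn]
  have hsub : S.filter (fun q : ℕ ↦ ‖(ξ : AddCircle (q : ℝ))‖ < H) ⊆
      (∏ n ∈ W, n.natAbs).primeFactors := fun q hq ↦ by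
    obtain ⟨hqS, hqH⟩ := Finset.mem_filter.1 hq
    rw [AddCircle.norm_eq] at hqH
    have hmem : round ((q : ℝ)⁻¹ * ξ) * (q : ℤ) ∈ W := hW.2 (by push_cast; exact hqH.le)
    refine Nat.mem_primeFactors.2 ⟨hS q hqS, ?_,
      Finset.prod_ne_zero_iff.2 fun n hn ↦ Int.natAbs_ne_zero.2 (hW_ne n hn)⟩
    exact (Int.natCast_dvd.1 (dvd_mul_left _ _)).trans (Finset.dvd_prod_of_mem _ hmem)
  calc _ ≤ ((∏ n ∈ W, n.natAbs).primeFactors.card : ℝ) * Real.log 2 := by gcongr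
    _ ≤ W.card * Real.log (|ξ| + H) := card_primeFactors_prod_natAbs_mul_log_two_le hW_ne hW_le
    _ ≤ (2 * H + 1) * Real.log (|ξ| + H) := by
        gcongr
        · exact Real.log_nonneg (by linarith)
        · linarith [card_Icc_ceil_floor_le (a := ξ - H) (b := ξ + H) (by linarith)]

lemma eventually_half_le_primeCounting_mul_log :
    ∀ᶠ n : ℕ in atTop, (n / 2 : ℝ) ≤ π n * Real.log n := by
  have hlog := (Real.isLittleO_log_id_atTop.bound (c := 1 / 10) (by norm_num)).natCast_atTop
  filter_upwards [(tendsto_add_atTop_nat 1).eventually hlog, eventually_ge_atTop 2] with n hn hn2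
  have hn2' : (2 : ℝ) ≤ n := by exact_mod_cast hn2
  rw [id, Real.norm_of_nonneg (by positivity), Real.norm_of_nonneg (by positivity),
    Nat.cast_add_one] at hn
  have hpi := (div_le_iff₀ (Real.log_pos (by linarith))).1 (Chebyshev.pi_ge n)
  nlinarith [Real.log_two_gt_d9]

lemma isLittleO_log_pow_primeCounting (k : ℕ) :
    (fun n : ℕ ↦ Real.log n ^ k) =o[atTop] fun n ↦ (π n : ℝ) := by
  refine Asymptotics.isLittleO_iff.2 fun c hc ↦ ?_
  have hpow := ((Real.isLittleO_pow_log_id_atTop (n := k + 1)).bound (half_pos hc)).natCast_atTop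
  filter_upwards [hpow, eventually_half_le_primeCounting_mul_log, eventually_ge_atTop 2]
    with n hn hpi hn2
  have hlog : 0 < Real.log n := Real.log_pos (by exact_mod_cast hn2)
  rw [id, Real.norm_of_nonneg (by positivity), Real.norm_of_nonneg n.cast_nonneg] at hn
  rw [Real.norm_of_nonneg (by positivity), Real.norm_of_nonneg (Nat.cast_nonneg _)]
  refine le_of_mul_le_mul_right ?_ hlog
  calc Real.log n ^ k * Real.log n ≤ c * (n / 2) := by rw [← pow_succ]; linarith
    _ ≤ c * (π n * Real.log n) := by gcongr
    _ = c * π n * Real.log n := (mul_assoc _ _ _).symm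

lemma eventually_mul_log_pow_le_card_primes (A : ℝ) (k R : ℕ) :
    ∀ᶠ P : ℕ in atTop,
      A * Real.log P ^ k ≤ ((Nat.primesLE P).filter fun q ↦ R ≤ q).card := by
  have hR : (fun _ : ℕ ↦ (R : ℝ)) =o[atTop] fun n ↦ (π n : ℝ) := by
    refine Asymptotics.isLittleO_const_left.2 (.inr ?_)
    exact tendsto_norm_atTop_atTop.comp
      (tendsto_natCast_atTop_atTop.comp Nat.tendsto_primeCounting)
  have hlittle := ((isLittleO_log_pow_primeCounting k).const_mul_left A).add hR
  filter_upwards [hlittle.bound one_pos] with P hP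
  have hsub : (Nat.primesLE P).filter (¬R ≤ ·) ⊆ Finset.range R := fun q hq ↦
    Finset.mem_range.2 (not_le.1 (Finset.mem_filter.1 hq).2)
  have hcard : (π P : ℝ) ≤ ((Nat.primesLE P).filter fun q ↦ R ≤ q).card + R := by
    rw [← Nat.primesLE_card_eq_primeCounting,
      ← Finset.card_filter_add_card_filter_not (s := Nat.primesLE P) (R ≤ ·)]
    exact_mod_cast Nat.add_le_add_left ((Finset.card_le_card hsub).trans_eq (Finset.card_range R)) _
  rw [one_mul, Real.norm_of_nonneg (Nat.cast_nonneg _)] at hP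
  linarith [Real.le_norm_self (A * Real.log P ^ k + R)]

end PrimeCounting

section FractionMixture

lemma norm_fourierT_uniformFractions_floor_mul_le {δ : ℝ} {q : ℕ} (hq : 2 ≤ δ * q) (ξ : ℝ) :
    ‖fourierT (uniformFractions q ⌊δ * q⌋₊) ξ‖ * (δ * ‖(ξ : AddCircle (q : ℝ))‖) ≤ 1 := by
  have hq₀ : 0 < q := Nat.pos_of_ne_zero fun h ↦ by norm_num [h] at hq
  have hfloor : δ * q / 2 ≤ ⌊δ * q⌋₊ := by linarith [Nat.lt_floor_add_one (δ * q)]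
  set F := ‖fourierT (uniformFractions q ⌊δ * q⌋₊) ξ‖
  have : 0 ≤ F := norm_nonneg _
  refine le_of_mul_le_mul_left ?_ (show (0 : ℝ) < q / 2 by positivity)
  calc q / 2 * (F * (δ * ‖(ξ : AddCircle (q : ℝ))‖))
      = F * (δ * q / 2 * ‖(ξ : AddCircle (q : ℝ))‖) := by ring
    _ ≤ F * (⌊δ * q⌋₊ * ‖(ξ : AddCircle (q : ℝ))‖) := by gcongr
    _ ≤ q / 2 := norm_fourierT_uniformFractions_mul_le hq₀ _ ξ
    _ = q / 2 * 1 := (mul_one _).symm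

lemma norm_fourierT_le_one (μ : Measure ℝ) [IsProbabilityMeasure μ] (ξ : ℝ) :
    ‖fourierT μ ξ‖ ≤ 1 :=
  fourierT_eq_charFun μ ξ ▸ norm_charFun_le_one _

/-- The average over `q ∈ S` of the uniform measures on the fractions `a / q` in `(0, δ]`. -/
noncomputable def fractionMixture (δ : ℝ) (S : Finset ℕ) : Measure ℝ :=
  averageMeasure S fun q ↦ uniformFractions q ⌊δ * q⌋₊

/-- The points of `(0, δ]` that are rational with denominator at most `P`. -/
def smallRationals (δ : ℝ) (P : ℕ) : Set ℝ :=
  {x | x ∈ Ioc 0 δ ∧ ∃ r : ℚ, r.den ≤ P ∧ (r : ℝ) = x}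

variable {δ : ℝ} {S : Finset ℕ}

lemma isProbabilityMeasure_uniformFractions_floor {q : ℕ} (hq : 1 ≤ δ * q) :
    IsProbabilityMeasure (uniformFractions q ⌊δ * q⌋₊) :=
  isProbabilityMeasure_uniformFractions q (Nat.floor_pos.2 hq)

lemma isProbabilityMeasure_fractionMixture (hS : S.Nonempty) (hδS : ∀ q ∈ S, 1 ≤ δ * q) :
    IsProbabilityMeasure (fractionMixture δ S) :=
  isProbabilityMeasure_averageMeasure hS fun q hq ↦
    isProbabilityMeasure_uniformFractions_floor (hδS q hq)

lemma ae_fractionMixture_mem_smallRationals {P : ℕ} (hδ : 0 ≤ δ)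
    (hS : ∀ q ∈ S, q ∈ Ioc 0 P) : ∀ᵐ x ∂fractionMixture δ S, x ∈ smallRationals δ P := by
  refine ae_averageMeasure fun q hq ↦ ae_averageMeasure fun a ha ↦ ?_
  obtain ⟨hq₀, hqP⟩ := hS q hq
  obtain ⟨ha₀, haN⟩ := Finset.mem_Ico.1 ha
  have haδ : (a : ℝ) ≤ δ * q :=
    (Nat.cast_le.2 (Nat.lt_succ_iff.1 haN)).trans (Nat.floor_le (by positivity))
  rw [ae_dirac_eq]
  refine ⟨⟨by positivity, (div_le_iff₀ (by positivity)).2 haδ⟩,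
    Rat.divInt a q, ?_, by simp [Rat.divInt_eq_div]⟩
  exact (Nat.le_of_dvd hq₀ (Int.natCast_dvd_natCast.1 (Rat.den_dvd a q))).trans hqP

lemma norm_fourierT_fractionMixture_le (hδ : 0 < δ) (hS : S.Nonempty)
    (hδS : ∀ q ∈ S, 2 ≤ δ * q) {ξ L : ℝ} (hL : 0 < L)
    (hbad : (S.filter fun q : ℕ ↦ ‖(ξ : AddCircle (q : ℝ))‖ < L / δ).card * L ≤ S.card) :
    ‖fourierT (fractionMixture δ S) ξ‖ ≤ 2 / L := by
  have hprob (q : ℕ) (hq : q ∈ S) : IsProbabilityMeasure (uniformFractions q ⌊δ * q⌋₊) :=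
    isProbabilityMeasure_uniformFractions_floor (one_le_two.trans (hδS q hq))
  rw [fourierT_eq_charFun, fractionMixture,
    charFun_averageMeasure fun q hq ↦ have := hprob q hq; inferInstance]
  simp only [← fourierT_eq_charFun]
  refine (norm_expect_le_of_card_filter_le (η := 1 / L) (ε := 1 / L)
    (p := fun q : ℕ ↦ ‖(ξ : AddCircle (q : ℝ))‖ < L / δ) (by positivity) hS
    (fun q hq ↦ have := hprob q hq; norm_fourierT_le_one _ ξ) (fun q hq hfar ↦ ?_) ?_).trans_eq ?_
  · have hdist : L ≤ δ * ‖(ξ : AddCircle (q : ℝ))‖ := (div_le_iff₀' hδ).1 (not_lt.1 hfar)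
    rw [le_div_iff₀ hL]
    exact (mul_le_mul_of_nonneg_left hdist (norm_nonneg _)).trans
      (norm_fourierT_uniformFractions_floor_mul_le (hδS q hq) ξ)
  · rwa [one_div_mul_eq_div, le_div_iff₀ hL]
  · ring

lemma log_lt_sqrt {x : ℝ} (hx : 0 < x) : Real.log x < √x := by
  have h := Real.log_le_sub_one_of_pos (show 0 < √x / 2 by positivity)
  rw [Real.log_div (by positivity) two_ne_zero, Real.log_sqrt hx.le] at h
  linarith [Real.log_two_lt_d9]

lemma norm_fourierT_fractionMixture_le_two_div_log (hδ : 0 < δ) (hδ4 : δ ≤ 1 / 4)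
    (hS : S.Nonempty) (hprime : ∀ q ∈ S, q.Prime) (hδS : ∀ q ∈ S, 2 ≤ δ * q) {ξ : ℝ}
    (hξ : 1 / δ ^ 2 ≤ |ξ|) (hcard : 9 / δ * Real.log |ξ| ^ 3 ≤ S.card) :
    ‖fourierT (fractionMixture δ S) ξ‖ ≤ 2 / Real.log |ξ| := by
  have hδinv : 4 ≤ 1 / δ := by rw [le_div_iff₀ hδ]; linarith
  rw [← one_div_pow] at hξ
  have hξ16 : 16 ≤ |ξ| := by nlinarith
  set L := Real.log |ξ|
  have hL1 : 1 ≤ L :=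
    (Real.le_log_iff_exp_le (by linarith)).2 (by linarith [Real.exp_one_lt_d9])
  have hH1 : 1 ≤ L / δ := by rw [div_eq_mul_one_div]; nlinarith
  have hHξ : L / δ < |ξ| :=
    calc L / δ = L * (1 / δ) := div_eq_mul_one_div _ _
      _ < √|ξ| * √|ξ| :=
        mul_lt_mul (log_lt_sqrt (by linarith)) (Real.le_sqrt_of_sq_le hξ) (by positivity)
          (by positivity)
      _ = |ξ| := Real.mul_self_sqrt (abs_nonneg ξ)
  have hlog : Real.log (|ξ| + L / δ) ≤ 2 * L :=
    calc Real.log (|ξ| + L / δ) ≤ Real.log (|ξ| ^ 2) :=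
          Real.log_le_log (by linarith) (by nlinarith)
      _ = 2 * L := by rw [Real.log_pow, Nat.cast_ofNat]
  refine norm_fourierT_fractionMixture_le hδ hS hδS (by linarith) (le_trans ?_ hcard)
  have hbad := card_filter_norm_addCircle_lt_mul_log_two_le hprime (by positivity) hHξ
    (by linarith)
  set n : ℝ := ((S.filter fun q : ℕ ↦ ‖(ξ : AddCircle (q : ℝ))‖ < L / δ).card : ℝ)
  have hn : n ≤ 9 * (L / δ) * L := by
    have : n * Real.log 2 ≤ 3 * (L / δ) * (2 * L) :=
      hbad.trans (mul_le_mul (by linarith) hlog (Real.log_nonneg (by linarith)) (by positivity))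
    nlinarith [Real.log_two_gt_d9, show 0 ≤ L / δ * L by positivity]
  calc n * L ≤ 9 * (L / δ) * L * L := by gcongr
    _ = 9 / δ * L ^ 3 := by ring

end FractionMixture

/-- `ρ` is a probability measure on `smallRationals δ P` whose Fourier transform is bounded by
`2 / log |ξ|` in the frequency window `δ⁻² ≤ |ξ| ≤ P ^ K`. -/
structure IsDecayingBlock (δ : ℝ) (P K : ℕ) (ρ : Measure ℝ) : Prop where
  isProbabilityMeasure : IsProbabilityMeasure ρ
  ae_mem_smallRationals : ∀ᵐ x ∂ρ, x ∈ smallRationals δ P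
  norm_fourierT_le : ∀ ξ : ℝ, 1 / δ ^ 2 ≤ |ξ| → |ξ| ≤ (P : ℝ) ^ K →
    ‖fourierT ρ ξ‖ ≤ 2 / Real.log |ξ|

lemma eventually_exists_isDecayingBlock {δ : ℝ} (hδ : 0 < δ) (hδ4 : δ ≤ 1 / 4) (K : ℕ) :
    ∀ᶠ P : ℕ in atTop, ∃ ρ, IsDecayingBlock δ P K ρ := by
  filter_upwards [eventually_mul_log_pow_le_card_primes (9 / δ * K ^ 3) 3 ⌈2 / δ⌉₊,
    eventually_mul_log_pow_le_card_primes 1 0 ⌈2 / δ⌉₊] with P hcard hpos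
  set S := (Nat.primesLE P).filter fun q ↦ ⌈2 / δ⌉₊ ≤ q with hS
  simp only [pow_zero, mul_one, Nat.one_le_cast, Finset.one_le_card] at hpos
  have hmem {q : ℕ} (hq : q ∈ S) : q ≤ P ∧ q.Prime ∧ 2 ≤ δ * q := by
    rw [hS, Finset.mem_filter, Nat.mem_primesLE, Nat.ceil_le, div_le_iff₀' hδ] at hq
    exact ⟨hq.1.1, hq.1.2, hq.2⟩
  refine ⟨fractionMixture δ S, ?_, ?_, fun ξ hξ hξP ↦ ?_⟩
  · exact isProbabilityMeasure_fractionMixture hpos fun q hq ↦ one_le_two.trans (hmem hq).2.2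
  · exact ae_fractionMixture_mem_smallRationals hδ.le fun q hq ↦
      ⟨(hmem hq).2.1.pos, (hmem hq).1⟩
  · refine norm_fourierT_fractionMixture_le_two_div_log hδ hδ4 hpos (fun q hq ↦ (hmem hq).2.1)
      (fun q hq ↦ (hmem hq).2.2) hξ (le_trans ?_ hcard)
    have hξ1 : 1 ≤ |ξ| := le_trans (by rw [← one_div_pow]; exact one_le_pow₀ (by
      rw [le_div_iff₀ hδ]; linarith)) hξ
    have hlog : Real.log |ξ| ≤ K * Real.log P := by
      rw [← Real.log_pow]
      exact Real.log_le_log (by linarith) hξP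
    calc 9 / δ * Real.log |ξ| ^ 3 ≤ 9 / δ * (K * Real.log P) ^ 3 := by
          have := Real.log_nonneg hξ1
          gcongr
      _ = 9 / δ * K ^ 3 * Real.log P ^ 3 := by ring

section ScaleSequence

lemma liouville_of_forall_exists_rat {x : ℝ}
    (h : ∀ n : ℕ, ∃ r : ℚ, x ≠ r ∧ |x - r| < 1 / (2 * r.den : ℝ) ^ n) : Liouville x := by
  intro n
  obtain ⟨r, hne, hlt⟩ := h n
  have hr : ((2 * r.num : ℤ) : ℝ) / ((2 * r.den : ℤ) : ℝ) = r := by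
    push_cast
    rw [mul_div_mul_left _ _ two_ne_zero, ← Rat.cast_def]
  refine ⟨2 * r.num, 2 * r.den, ?_, hr ▸ hne, ?_⟩
  · have := r.den_pos
    lia
  · rw [hr]
    push_cast
    exact hlt

/-- The scales of the construction: the `k`-th summand is a rational in
`smallRationals (1 / d k ^ (2 * (k + 1))) (d (k + 1))`, and its Fourier transform is controlled for
`d k ^ (4 * (k + 1)) ≤ |ξ| ≤ d (k + 1) ^ (4 * (k + 2))`. -/
structure IsScaleSequence (d : ℕ → ℕ) : Prop where
  zero : d 0 = 2
  sq_le_succ : ∀ k, d k ^ 2 ≤ d (k + 1)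

namespace IsScaleSequence

variable {d : ℕ → ℕ} (hd : IsScaleSequence d)
include hd

lemma two_le (k : ℕ) : 2 ≤ d k := by
  induction k with
  | zero => exact hd.zero.ge
  | succ k ih => nlinarith [hd.sq_le_succ k]

lemma strictMono_pow : StrictMono fun k ↦ (d k : ℝ) ^ (4 * (k + 1)) := by
  refine strictMono_nat_of_lt_succ fun k ↦ ?_
  have hk := hd.two_le k
  have hlt : d k < d (k + 1) := by nlinarith [hd.sq_le_succ k]
  calc (d k : ℝ) ^ (4 * (k + 1)) < (d (k + 1) : ℝ) ^ (4 * (k + 1)) := by gcongr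
    _ ≤ (d (k + 1) : ℝ) ^ (4 * (k + 1 + 1)) := by
      gcongr
      · exact_mod_cast one_le_two.trans (hd.two_le (k + 1))
      · lia

lemma exists_mem_window {x : ℝ} (hx : 16 < x) :
    ∃ k, (d k : ℝ) ^ (4 * (k + 1)) ≤ x ∧ x ≤ (d (k + 1) : ℝ) ^ (4 * (k + 2)) := by
  have hlim : Tendsto (fun k ↦ (d k : ℝ) ^ (4 * (k + 1))) atTop atTop := by
    refine tendsto_atTop_mono (fun k ↦ ?_) (tendsto_pow_atTop_atTop_of_one_lt one_lt_two)
    calc (2 : ℝ) ^ k ≤ 2 ^ (4 * (k + 1)) := pow_le_pow_right₀ one_le_two (by lia)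
      _ ≤ (d k : ℝ) ^ (4 * (k + 1)) := by gcongr; exact_mod_cast hd.two_le k
  obtain ⟨k, hk, hk'⟩ := hd.strictMono_pow.exists_between_of_tendsto_atTop hlim
    (show (d 0 : ℝ) ^ (4 * (0 + 1)) < x by norm_num [hd.zero, hx])
  exact ⟨k, hk.le, hk'⟩

lemma one_div_pow_le_mul_half_pow (k j : ℕ) :
    1 / (d (j + k) : ℝ) ^ (2 * (j + k + 1)) ≤ 1 / (d k : ℝ) ^ (2 * (k + 1)) * (1 / 2) ^ j := by
  have hmono : 2 ^ j * d k ^ (2 * (k + 1)) ≤ d (j + k) ^ (2 * (j + k + 1)) := by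
    have hle : d k ≤ d (j + k) := monotone_nat_of_le_succ (fun i ↦
      (Nat.le_self_pow two_ne_zero _).trans (hd.sq_le_succ i)) (Nat.le_add_left k j)
    calc 2 ^ j * d k ^ (2 * (k + 1)) ≤ d (j + k) ^ (2 * j) * d (j + k) ^ (2 * (k + 1)) := by
          gcongr
          · exact one_le_two.trans (hd.two_le _)
          · exact hd.two_le _
          · lia
      _ = d (j + k) ^ (2 * (j + k + 1)) := by rw [← pow_add]; congr 1; ring
  have hpos : 0 < d k := two_pos.trans_le (hd.two_le k)
  rw [one_div_pow, one_div_mul_one_div, mul_comm (_ ^ (2 * (k + 1)))]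
  exact one_div_le_one_div_of_le (by positivity) (by exact_mod_cast hmono)

variable {x : ℕ → ℝ}
  (hx : ∀ k, x k ∈ smallRationals (1 / (d k : ℝ) ^ (2 * (k + 1))) (d (k + 1)))
include hx

lemma exists_rat_eq_sum_range (n : ℕ) :
    ∃ r : ℚ, 2 * r.den ≤ d n ^ 2 ∧ (r : ℝ) = ∑ i ∈ Finset.range n, x i := by
  induction n with
  | zero => exact ⟨0, by simp [hd.zero], by simp⟩
  | succ n ih =>
    obtain ⟨r, hr, hr_sum⟩ := ih
    obtain ⟨-, s, hs, hs_eq⟩ := hx n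
    refine ⟨r + s, ?_, by rw [Finset.sum_range_succ, Rat.cast_add, hr_sum, hs_eq]⟩
    calc 2 * (r + s).den ≤ 2 * (r.den * s.den) :=
          Nat.mul_le_mul_left 2 (Nat.le_of_dvd (by positivity) (Rat.add_den_dvd r s))
      _ = 2 * r.den * s.den := (mul_assoc _ _ _).symm
      _ ≤ d (n + 1) * d (n + 1) := Nat.mul_le_mul (hr.trans (hd.sq_le_succ n)) hs
      _ = d (n + 1) ^ 2 := (sq _).symm

lemma apply_le_mul_half_pow (k j : ℕ) :
    x (j + k) ≤ 1 / (d k : ℝ) ^ (2 * (k + 1)) * (1 / 2) ^ j :=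
  (hx (j + k)).1.2.trans (hd.one_div_pow_le_mul_half_pow k j)

lemma summable : Summable x :=
  .of_nonneg_of_le (fun k ↦ (hx k).1.1.le) (hd.apply_le_mul_half_pow hx 0)
    (summable_geometric_two.mul_left _)

lemma tsum_nat_add_lt (n : ℕ) : ∑' j, x (j + n) < 1 / ((d n : ℝ) ^ 2) ^ n := by
  have hdn : (2 : ℝ) ≤ d n := by exact_mod_cast hd.two_le n
  have htail := (summable_nat_add_iff n).2 (hd.summable hx)
  calc ∑' j, x (j + n) ≤ ∑' j : ℕ, 1 / (d n : ℝ) ^ (2 * (n + 1)) * (1 / 2) ^ j :=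
        htail.tsum_le_tsum (hd.apply_le_mul_half_pow hx n) (summable_geometric_two.mul_left _)
    _ = 2 / (d n : ℝ) ^ 2 * (1 / ((d n : ℝ) ^ 2) ^ n) := by
        rw [tsum_mul_left, tsum_geometric_two]
        field_simp
        ring
    _ < 1 * (1 / ((d n : ℝ) ^ 2) ^ n) := by
        gcongr
        rw [div_lt_one (by positivity)]
        nlinarith
    _ = 1 / ((d n : ℝ) ^ 2) ^ n := one_mul _

lemma liouville_tsum : Liouville (∑' k, x k) := by
  refine liouville_of_forall_exists_rat fun n ↦ ?_
  obtain ⟨r, hr, hr_sum⟩ := hd.exists_rat_eq_sum_range hx n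
  have htail : ∑' k, x k - r = ∑' j, x (j + n) := by
    rw [hr_sum, ← (hd.summable hx).sum_add_tsum_nat_add n, add_sub_cancel_left]
  have hpos : 0 < ∑' j, x (j + n) :=
    ((summable_nat_add_iff n).2 (hd.summable hx)).tsum_pos (fun j ↦ (hx _).1.1.le) 0 (hx _).1.1
  refine ⟨r, sub_ne_zero.1 (htail ▸ hpos.ne'), ?_⟩
  have hden : (2 * r.den : ℝ) ≤ (d n : ℝ) ^ 2 := by exact_mod_cast hr
  rw [htail, abs_of_pos hpos]
  exact (hd.tsum_nat_add_lt hx n).trans_le (by gcongr)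

end IsScaleSequence

lemma exists_isScaleSequence_isDecayingBlock :
    ∃ (d : ℕ → ℕ) (ρ : ℕ → Measure ℝ), IsScaleSequence d ∧
      ∀ k, IsDecayingBlock (1 / (d k : ℝ) ^ (2 * (k + 1))) (d (k + 1)) (4 * (k + 2)) (ρ k) := by
  have hstep (k D : ℕ) (hD : 2 ≤ D) : ∃ P ρ, D ^ 2 ≤ P ∧
      IsDecayingBlock (1 / (D : ℝ) ^ (2 * (k + 1))) P (4 * (k + 2)) ρ := by
    have hpow : 4 ≤ D ^ (2 * (k + 1)) :=
      calc 4 = 2 ^ 2 := rfl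
        _ ≤ 2 ^ (2 * (k + 1)) := Nat.pow_le_pow_right two_pos (by lia)
        _ ≤ D ^ (2 * (k + 1)) := Nat.pow_le_pow_left hD _
    have hblock := eventually_exists_isDecayingBlock (δ := 1 / (D : ℝ) ^ (2 * (k + 1)))
      (by positivity) (one_div_le_one_div_of_le four_pos (by exact_mod_cast hpow)) (4 * (k + 2))
    obtain ⟨P, ⟨ρ, hρ⟩, hP⟩ := (hblock.and (eventually_ge_atTop (D ^ 2))).exists
    exact ⟨P, ρ, hP, hρ⟩
  choose! P ρ hP hρ using hstep
  let d : ℕ → ℕ := Nat.rec 2 P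
  have hd_two (k : ℕ) : 2 ≤ d k := by
    induction k with
    | zero => exact le_rfl
    | succ k ih => exact ih.trans ((Nat.le_self_pow two_ne_zero _).trans (hP k (d k) ih))
  exact ⟨d, fun k ↦ ρ k (d k), ⟨rfl, fun k ↦ hP k (d k) (hd_two k)⟩,
    fun k ↦ hρ k (d k) (hd_two k)⟩

end ScaleSequence

theorem exists_isProbabilityMeasure_ae_liouville_norm_fourierT_le :
    ∃ μ : Measure ℝ, IsProbabilityMeasure μ ∧ (∀ᵐ x ∂μ, Liouville x) ∧
      ∀ ξ : ℝ, 16 < |ξ| → ‖fourierT μ ξ‖ ≤ 2 / Real.log |ξ| := by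
  obtain ⟨d, ρ, hd, hρ⟩ := exists_isScaleSequence_isDecayingBlock
  have hprob (k : ℕ) : IsProbabilityMeasure (ρ k) := (hρ k).isProbabilityMeasure
  have hsmall : ∀ᵐ ω ∂Measure.infinitePi ρ,
      ∀ k, ω k ∈ smallRationals (1 / (d k : ℝ) ^ (2 * (k + 1))) (d (k + 1)) :=
    ae_all_iff.2 fun k ↦ (measurePreserving_eval_infinitePi ρ k).quasiMeasurePreserving.ae
      (hρ k).ae_mem_smallRationals
  have hsummable : ∀ᵐ ω ∂Measure.infinitePi ρ, Summable ω := hsmall.mono fun ω ↦ hd.summable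
  have hmeas : AEMeasurable (fun ω : ℕ → ℝ ↦ ∑' k, ω k) (Measure.infinitePi ρ) :=
    aemeasurable_tsum_of_ae_summable (fun k ↦ (measurable_pi_apply k).aemeasurable) hsummable
  refine ⟨(Measure.infinitePi ρ).map fun ω ↦ ∑' k, ω k,
    Measure.isProbabilityMeasure_map hmeas, ?_, fun ξ hξ ↦ ?_⟩
  · rw [ae_map_iff hmeas IsGδ.setOfPred_liouville.measurableSet]
    exact hsmall.mono fun ω ↦ hd.liouville_tsum
  · obtain ⟨k, hk, hk'⟩ := hd.exists_mem_window hξ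
    refine le_trans ?_ ((hρ k).norm_fourierT_le ξ ?_ hk')
    · simpa only [fourierT_eq_charFun] using
        norm_charFun_map_tsum_infinitePi_le hsummable k (-2 * Real.pi * ξ)
    · rwa [one_div_pow, one_div_one_div, ← pow_mul, mul_right_comm]

lemma fourierT_conv_dirac_add_dirac_neg (μ : Measure ℝ) [IsFiniteMeasure μ] (a ξ : ℝ) :
    fourierT (μ ∗ (Measure.dirac a + Measure.dirac (-a))) ξ =
      fourierT μ ξ * (2 * Real.cos (2 * Real.pi * ξ * a) : ℝ) := by
  have hint (x : ℝ) : Integrable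
      (fun y : ℝ ↦ Complex.exp (((-2 * Real.pi * ξ * y : ℝ) : ℂ) * Complex.I))
      (Measure.dirac x) := integrable_dirac (by simp)
  have hdirac : fourierT (Measure.dirac a + Measure.dirac (-a)) ξ =
      (2 * Real.cos (2 * Real.pi * ξ * a) : ℝ) := by
    rw [fourierT, integral_add_measure (hint a) (hint (-a)), integral_dirac, integral_dirac]
    push_cast
    rw [Complex.two_cos, add_comm]
    congr 2 <;> ring
  rw [← hdirac, fourierT_eq_charFun, charFun_conv, ← fourierT_eq_charFun, ← fourierT_eq_charFun]

lemma liouville_add_intCast {x : ℝ} (hx : Liouville x) (m : ℤ) : Liouville (x + m) :=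
  forall_liouvilleWith_iff.1 fun p ↦ (hx.liouvilleWith p).add_int m

lemma ae_liouville_conv_dirac_intCast {μ : Measure ℝ} [SFinite μ] (hμ : ∀ᵐ x ∂μ, Liouville x)
    (m : ℤ) : ∀ᵐ x ∂(μ ∗ Measure.dirac (m : ℝ)), Liouville x := by
  rw [Measure.conv_dirac, ae_map_iff (by fun_prop) IsGδ.setOfPred_liouville.measurableSet]
  exact hμ.mono fun x hx ↦ liouville_add_intCast hx m

theorem stmt12 :
    ∃ ν : Measure ℝ, ν ≠ 0 ∧ IsFiniteMeasure ν ∧ ν {x : ℝ | Liouville x}ᶜ = 0 ∧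
      ∃ C > (0 : ℝ), ∃ M > Real.exp 1,
        ∀ ξ : ℝ, M ≤ |ξ| →
          ‖fourierT ν ξ‖ ≤ C * |Real.cos (2 * Real.pi * ξ)| / Real.log |ξ| := by
  obtain ⟨μ, hprob, hLiouville, hdecay⟩ :=
    exists_isProbabilityMeasure_ae_liouville_norm_fourierT_le
  refine ⟨μ ∗ (Measure.dirac 1 + Measure.dirac (-1)), ?_, inferInstance, ?_, 4, four_pos, 17,
    by linarith [Real.exp_one_lt_d9], fun ξ hξ ↦ ?_⟩
  · intro h
    rw [Measure.conv_add] at h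
    simpa using congrArg (· univ) h
  · rw [Measure.conv_add, Measure.add_apply, add_eq_zero]
    exact ⟨by exact_mod_cast ae_liouville_conv_dirac_intCast hLiouville 1,
      by exact_mod_cast ae_liouville_conv_dirac_intCast hLiouville (-1)⟩
  · rw [fourierT_conv_dirac_add_dirac_neg, mul_one, norm_mul, Complex.norm_real, norm_mul,
      Real.norm_eq_abs, Real.norm_eq_abs, abs_two]
    calc ‖fourierT μ ξ‖ * (2 * |Real.cos (2 * Real.pi * ξ)|)
        ≤ 2 / Real.log |ξ| * (2 * |Real.cos (2 * Real.pi * ξ)|) := by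
          gcongr
          exact hdecay ξ (by linarith)
      _ = 4 * |Real.cos (2 * Real.pi * ξ)| / Real.log |ξ| := by ring
end
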